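/- Let Ξ, Ω ⊆ ℍ be domains, θ ∈ [0,2π), and let T : Ξ → Ω be a C¹ bijection. Let A : Ξ → ℍ and B : Ω → ℍ be C¹ functions with A(z) ≠ 0 for all z ∈ Ξ and B(ζ) ≠ 0 for all ζ ∈ Ω, and suppose the chain rule ${}^θ𝒟_z[\,A·(f∘T)\,] = (B∘T)·\big(({}^θ𝒟 f)∘T\big)$ holds on Ξ for every f ∈ C¹(Ω,ℍ). Then for all u, v ∈ ℍ and every f ∈ C¹(Ω,ℍ): ${}^θ_u𝒟_z\big[\,e^{⟨v−u,·⟩_θ}\,A·(f∘T)\,\big](z) = e^{⟨v−u,z⟩_θ}\,B(T(z))·\big({}^θ𝒟 f(T(z)) + δ_T(T(z))\,f(T(z))\big)$ for all z ∈ Ξ, where δ_T(ζ) := B(ζ)^{−1}·v·A(T^{−1}(ζ)) for ζ ∈ Ω. -/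

import Mathlib

open MeasureTheory

noncomputable section

/-- The real quaternions `ℍ`. -/
abbrev H4 : Type := Quaternion ℝ

instance : MeasurableSpace H4 := borel _
instance : BorelSpace H4 := ⟨rfl⟩

/-- The quaternion unit `i`. -/
def qI : H4 := ⟨0, 1, 0, 0⟩
/-- The quaternion unit `j`. -/
def qJ : H4 := ⟨0, 0, 1, 0⟩
/-- `e^{iθ} = cos θ + (sin θ) i` as a quaternion. -/
def eIθ (θ : ℝ) : H4 := ⟨Real.cos θ, Real.sin θ, 0, 0⟩
/-- The basis direction `i e^{iθ} j`. -/
def e2 (θ : ℝ) : H4 := qI * eIθ θ * qJ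
/-- The basis direction `e^{iθ} j`. -/
def e3 (θ : ℝ) : H4 := eIθ θ * qJ

/-- Third θ-coordinate of a quaternion `z = x₀ + x₁ i + x₂ (i e^{iθ} j) + x₃ (e^{iθ} j)`. -/
def x2θ (θ : ℝ) (z : H4) : ℝ := -z.imJ * Real.sin θ + z.imK * Real.cos θ
/-- Fourth θ-coordinate of a quaternion. -/
def x3θ (θ : ℝ) (z : H4) : ℝ := z.imJ * Real.cos θ + z.imK * Real.sin θ

/-- The θ-inner product `⟨u,z⟩_θ`: the dot product of θ-coordinates. -/
def innerθ (θ : ℝ) (u z : H4) : ℝ :=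
  u.re * z.re + u.imI * z.imI + x2θ θ u * x2θ θ z + x3θ θ u * x3θ θ z

/-- Left θ-Cauchy–Riemann operator
`{}^θ𝒟 f = ∂f/∂x₀ + i ∂f/∂x₁ + (i e^{iθ} j) ∂f/∂x₂ + (e^{iθ} j) ∂f/∂x₃`. -/
def Dl (θ : ℝ) (f : H4 → H4) (z : H4) : H4 :=
  fderiv ℝ f z 1 + qI * fderiv ℝ f z qI + e2 θ * fderiv ℝ f z (e2 θ) +
    e3 θ * fderiv ℝ f z (e3 θ)

/-- Left (θ,u)-Cauchy–Riemann operator `{}^θ_u𝒟 f = {}^θ𝒟 f + u f`. -/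
def Dlu (θ : ℝ) (u : H4) (f : H4 → H4) (z : H4) : H4 := Dl θ f z + u * f z

/-- Right θ-Cauchy–Riemann operator. -/
def Dr (θ : ℝ) (f : H4 → H4) (z : H4) : H4 :=
  fderiv ℝ f z 1 + fderiv ℝ f z qI * qI + fderiv ℝ f z (e2 θ) * e2 θ +
    fderiv ℝ f z (e3 θ) * e3 θ

/-- Right (θ,u)-Cauchy–Riemann operator `{}^θ𝒟_{r,u} f = {}^θ𝒟_r f + f u`. -/
def Dru (θ : ℝ) (u : H4) (f : H4 → H4) (z : H4) : H4 := Dr θ f z + f z * u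

/-- Embedding of ℂ into the quaternions, `ℂ ≅ ℝ + ℝi ⊂ ℍ`. -/
def toH (a : ℂ) : H4 := ⟨a.re, a.im, 0, 0⟩

/-- First complex θ-component of a quaternion: `z₁ = x₀ + x₁ i`. -/
def c1 (z : H4) : ℂ := ⟨z.re, z.imI⟩
/-- Second complex θ-component of a quaternion: `z₂ = x₂ + x₃ i`. -/
def c2 (θ : ℝ) (z : H4) : ℂ := ⟨x2θ θ z, x3θ θ z⟩

/-- Wirtinger operator `∂/∂z̄₁ = ∂/∂x₀ + i ∂/∂x₁` on ℂ-valued functions. -/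
def db1 (f : H4 → ℂ) (z : H4) : ℂ := fderiv ℝ f z 1 + Complex.I * fderiv ℝ f z qI
/-- Wirtinger operator `∂/∂z̄₂ = ∂/∂x₂ + i ∂/∂x₃` on ℂ-valued functions. -/
def db2 (θ : ℝ) (f : H4 → ℂ) (z : H4) : ℂ :=
  fderiv ℝ f z (e2 θ) + Complex.I * fderiv ℝ f z (e3 θ)
/-- Wirtinger operator `∂/∂z₂ = ∂/∂x₂ − i ∂/∂x₃` on ℂ-valued functions. -/
def dz2 (θ : ℝ) (f : H4 → ℂ) (z : H4) : ℂ :=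
  fderiv ℝ f z (e2 θ) - Complex.I * fderiv ℝ f z (e3 θ)

/-- `e^{iθ}` as a complex number. -/
def cexpI (θ : ℝ) : ℂ := ⟨Real.cos θ, Real.sin θ⟩

/-- The θ-inner product as a linear functional. -/
def innerLin (θ : ℝ) (a : H4) : H4 →ₗ[ℝ] ℝ where
  toFun := innerθ θ a
  map_add' x y := by simp [innerθ, x2θ, x3θ]; ring
  map_smul' c x := by simp [innerθ, x2θ, x3θ]; ring

theorem inner_hasFDerivAt (θ : ℝ) (a z : H4) :
    HasFDerivAt (innerθ θ a) (LinearMap.toContinuousLinearMap (innerLin θ a)) z :=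
  (LinearMap.toContinuousLinearMap (innerLin θ a)).hasFDerivAt

theorem cc_one_re : (1 : H4).re = 1 := rfl
theorem cc_one_imI : (1 : H4).imI = 0 := rfl
theorem cc_one_imJ : (1 : H4).imJ = 0 := rfl
theorem cc_one_imK : (1 : H4).imK = 0 := rfl
theorem cc_qI_re : qI.re = 0 := rfl
theorem cc_qI_imI : qI.imI = 1 := rfl
theorem cc_qI_imJ : qI.imJ = 0 := rfl
theorem cc_qI_imK : qI.imK = 0 := rfl
theorem cc_qJ_re : qJ.re = 0 := rfl
theorem cc_qJ_imI : qJ.imI = 0 := rfl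
theorem cc_qJ_imJ : qJ.imJ = 1 := rfl
theorem cc_qJ_imK : qJ.imK = 0 := rfl
theorem cc_eI_re (θ : ℝ) : (eIθ θ).re = Real.cos θ := rfl
theorem cc_eI_imI (θ : ℝ) : (eIθ θ).imI = Real.sin θ := rfl
theorem cc_eI_imJ (θ : ℝ) : (eIθ θ).imJ = 0 := rfl
theorem cc_eI_imK (θ : ℝ) : (eIθ θ).imK = 0 := rfl
theorem cc_e2_re (θ : ℝ) : (e2 θ).re = 0 := by
  simp only [e2, Quaternion.re_mul, Quaternion.imI_mul, Quaternion.imJ_mul, Quaternion.imK_mul,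
    cc_qI_re, cc_qI_imI, cc_qI_imJ, cc_qI_imK, cc_qJ_re, cc_qJ_imI, cc_qJ_imJ, cc_qJ_imK, cc_eI_re, cc_eI_imI, cc_eI_imJ, cc_eI_imK]
  ring
theorem cc_e2_imI (θ : ℝ) : (e2 θ).imI = 0 := by
  simp only [e2, Quaternion.re_mul, Quaternion.imI_mul, Quaternion.imJ_mul, Quaternion.imK_mul,
    cc_qI_re, cc_qI_imI, cc_qI_imJ, cc_qI_imK, cc_qJ_re, cc_qJ_imI, cc_qJ_imJ, cc_qJ_imK, cc_eI_re, cc_eI_imI, cc_eI_imJ, cc_eI_imK]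
  ring
theorem cc_e2_imJ (θ : ℝ) : (e2 θ).imJ = -Real.sin θ := by
  simp only [e2, Quaternion.re_mul, Quaternion.imI_mul, Quaternion.imJ_mul, Quaternion.imK_mul,
    cc_qI_re, cc_qI_imI, cc_qI_imJ, cc_qI_imK, cc_qJ_re, cc_qJ_imI, cc_qJ_imJ, cc_qJ_imK, cc_eI_re, cc_eI_imI, cc_eI_imJ, cc_eI_imK]
  ring
theorem cc_e2_imK (θ : ℝ) : (e2 θ).imK = Real.cos θ := by
  simp only [e2, Quaternion.re_mul, Quaternion.imI_mul, Quaternion.imJ_mul, Quaternion.imK_mul,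
    cc_qI_re, cc_qI_imI, cc_qI_imJ, cc_qI_imK, cc_qJ_re, cc_qJ_imI, cc_qJ_imJ, cc_qJ_imK, cc_eI_re, cc_eI_imI, cc_eI_imJ, cc_eI_imK]
  ring
theorem cc_e3_re (θ : ℝ) : (e3 θ).re = 0 := by
  simp only [e3, Quaternion.re_mul, Quaternion.imI_mul, Quaternion.imJ_mul, Quaternion.imK_mul,
    cc_qI_re, cc_qI_imI, cc_qI_imJ, cc_qI_imK, cc_qJ_re, cc_qJ_imI, cc_qJ_imJ, cc_qJ_imK, cc_eI_re, cc_eI_imI, cc_eI_imJ, cc_eI_imK]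
  ring
theorem cc_e3_imI (θ : ℝ) : (e3 θ).imI = 0 := by
  simp only [e3, Quaternion.re_mul, Quaternion.imI_mul, Quaternion.imJ_mul, Quaternion.imK_mul,
    cc_qI_re, cc_qI_imI, cc_qI_imJ, cc_qI_imK, cc_qJ_re, cc_qJ_imI, cc_qJ_imJ, cc_qJ_imK, cc_eI_re, cc_eI_imI, cc_eI_imJ, cc_eI_imK]
  ring
theorem cc_e3_imJ (θ : ℝ) : (e3 θ).imJ = Real.cos θ := by
  simp only [e3, Quaternion.re_mul, Quaternion.imI_mul, Quaternion.imJ_mul, Quaternion.imK_mul,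
    cc_qI_re, cc_qI_imI, cc_qI_imJ, cc_qI_imK, cc_qJ_re, cc_qJ_imI, cc_qJ_imJ, cc_qJ_imK, cc_eI_re, cc_eI_imI, cc_eI_imJ, cc_eI_imK]
  ring
theorem cc_e3_imK (θ : ℝ) : (e3 θ).imK = Real.sin θ := by
  simp only [e3, Quaternion.re_mul, Quaternion.imI_mul, Quaternion.imJ_mul, Quaternion.imK_mul,
    cc_qI_re, cc_qI_imI, cc_qI_imJ, cc_qI_imK, cc_qJ_re, cc_qJ_imI, cc_qJ_imJ, cc_qJ_imK, cc_eI_re, cc_eI_imI, cc_eI_imJ, cc_eI_imK]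
  ring

theorem inner_expand (θ : ℝ) (a : H4) :
    innerθ θ a 1 • (1 : H4) + innerθ θ a qI • qI + innerθ θ a (e2 θ) • e2 θ
      + innerθ θ a (e3 θ) • e3 θ = a := by
  have h := Real.sin_sq_add_cos_sq θ
  have h1 : innerθ θ a 1 = a.re := by
    simp only [innerθ, x2θ, x3θ, cc_one_re, cc_one_imI, cc_one_imJ, cc_one_imK]
    ring
  have h2 : innerθ θ a qI = a.imI := by
    simp only [innerθ, x2θ, x3θ, cc_qI_re, cc_qI_imI, cc_qI_imJ, cc_qI_imK]
    ring
  have h3 : innerθ θ a (e2 θ) = x2θ θ a := by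
    simp only [innerθ, x2θ, x3θ, cc_e2_re, cc_e2_imI, cc_e2_imJ, cc_e2_imK]
    linear_combination (-a.imJ * Real.sin θ + a.imK * Real.cos θ) * h
  have h4 : innerθ θ a (e3 θ) = x3θ θ a := by
    simp only [innerθ, x2θ, x3θ, cc_e3_re, cc_e3_imI, cc_e3_imJ, cc_e3_imK]
    linear_combination (a.imJ * Real.cos θ + a.imK * Real.sin θ) * h
  rw [h1, h2, h3, h4]
  ext
  · simp only [Quaternion.re_add, Quaternion.re_smul, x2θ, x3θ, smul_eq_mul,
      cc_one_re, cc_qI_re, cc_e2_re, cc_e3_re]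
    ring
  · simp only [Quaternion.imI_add, Quaternion.imI_smul, x2θ, x3θ, smul_eq_mul,
      cc_one_imI, cc_qI_imI, cc_e2_imI, cc_e3_imI]
    ring
  · simp only [Quaternion.imJ_add, Quaternion.imJ_smul, x2θ, x3θ, smul_eq_mul,
      cc_one_imJ, cc_qI_imJ, cc_e2_imJ, cc_e3_imJ]
    linear_combination a.imJ * h
  · simp only [Quaternion.imK_add, Quaternion.imK_smul, x2θ, x3θ, smul_eq_mul,
      cc_one_imK, cc_qI_imK, cc_e2_imK, cc_e3_imK]
    linear_combination a.imK * h

theorem Dl_exp_smul (θ : ℝ) (a : H4) (g : H4 → H4) (z : H4) (hg : DifferentiableAt ℝ g z) :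
    Dl θ (fun w => Real.exp (innerθ θ a w) • g w) z
      = Real.exp (innerθ θ a z) • (Dl θ g z + a * g z) := by
  have hd := ((inner_hasFDerivAt θ a z).exp.smul hg.hasFDerivAt).fderiv
  have key : ∀ e : H4, fderiv ℝ (fun w => Real.exp (innerθ θ a w) • g w) z e
      = Real.exp (innerθ θ a z) • (fderiv ℝ g z e + innerθ θ a e • g z) := by
    intro e
    refine (congrArg (fun L => L e) hd).trans ?_
    have : innerLin θ a e = innerθ θ a e := rfl
    simp [this, smul_smul]
  have hx : a * g z = innerθ θ a 1 • g z + innerθ θ a qI • (qI * g z)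
      + innerθ θ a (e2 θ) • (e2 θ * g z) + innerθ θ a (e3 θ) • (e3 θ * g z) := by
    conv_lhs => rw [← inner_expand θ a]
    simp only [add_mul, smul_mul_assoc, one_mul]
  rw [hx]
  simp only [Dl, key]
  simp only [mul_add, add_mul, smul_add, mul_smul_comm, smul_mul_assoc, one_mul]
  abel

/-- conformal covariance of `{}^θ_u𝒟`:
`{}^θ_u𝒟[e^{⟨v−u,·⟩_θ} A (f∘T)](z) = e^{⟨v−u,z⟩_θ} B(T z) ({}^θ𝒟 f(Tz) + δ_T(Tz) f(Tz))`
with `δ_T(ζ) = B(ζ)⁻¹ v A(T⁻¹ ζ)`. -/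
theorem statement4 (Ξ Ω : Set H4) (hΞo : IsOpen Ξ) (hΞc : IsConnected Ξ)
    (hΩo : IsOpen Ω) (hΩc : IsConnected Ω) (θ : ℝ) (hθ : θ ∈ Set.Ico 0 (2 * Real.pi))
    (T : H4 → H4) (hT : ContDiffOn ℝ 1 T Ξ) (hTbij : Set.BijOn T Ξ Ω)
    (S : H4 → H4) (hS : ∀ z ∈ Ξ, S (T z) = z) (hS' : ∀ ζ ∈ Ω, T (S ζ) = ζ)
    (A B : H4 → H4) (hA : ContDiffOn ℝ 1 A Ξ) (hB : ContDiffOn ℝ 1 B Ω)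
    (hA0 : ∀ z ∈ Ξ, A z ≠ 0) (hB0 : ∀ ζ ∈ Ω, B ζ ≠ 0)
    (hchain : ∀ f : H4 → H4, ContDiffOn ℝ 1 f Ω →
      ∀ z ∈ Ξ, Dl θ (fun w => A w * f (T w)) z = B (T z) * Dl θ f (T z))
    (u v : H4) (f : H4 → H4) (hf : ContDiffOn ℝ 1 f Ω) :
    ∀ z ∈ Ξ,
      Dlu θ u (fun w => Real.exp (innerθ θ (v - u) w) • (A w * f (T w))) z
        = Real.exp (innerθ θ (v - u) z) •
            (B (T z) * (Dl θ f (T z) + ((B (T z))⁻¹ * v * A (S (T z))) * f (T z))) := by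
  intro z hz
  have hTz := hTbij.mapsTo hz
  have hAd := (hA.differentiableOn one_ne_zero).differentiableAt (hΞo.mem_nhds hz)
  have hTd := (hT.differentiableOn one_ne_zero).differentiableAt (hΞo.mem_nhds hz)
  have hfd := (hf.differentiableOn one_ne_zero).differentiableAt (hΩo.mem_nhds hTz)
  have hg : DifferentiableAt ℝ (fun w => A w * f (T w)) z :=
    hAd.mul (DifferentiableAt.comp (g := f) z hfd hTd)
  have hB1 : B (T z) * (B (T z))⁻¹ = 1 := mul_inv_cancel₀ (hB0 _ hTz)
  rw [Dlu, Dl_exp_smul θ (v - u) _ z hg, hchain f hf z hz, hS z hz, mul_smul_comm, ← smul_add]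
  congr 1
  have : B (T z) * ((B (T z))⁻¹ * v * A z * f (T z)) = v * (A z * f (T z)) := by
    simp only [← mul_assoc, hB1, one_mul]
  rw [mul_add, this, sub_mul]
  abel

end
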